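/- Let G be an interval graph with interval representation I and right-endpoint ordering σ, and let P be a normal path of G. If u,w ∈ V(P) satisfy u <_P w and w <_σ u, then w and u are adjacent in G. -/

import Mathlib

/-- `p` is a normal path of the interval graph `G` with right-endpoint function `r`:
it is a path (consecutive vertices adjacent, no repeated vertex), its first vertex is
the leftmost vertex of the path in the right-endpoint ordering, and each vertex `p[i+1]`
is the leftmost (in the right-endpoint ordering) vertex among the later path vertices
that are adjacent to `p[i]`. -/
def IsNormalPath {V : Type*} (G : SimpleGraph V) (r : V → ℝ) (p : List V) : Prop :=
  p.Chain' G.Adj ∧ p.Nodup ∧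
  (∀ (h : p ≠ []), ∀ v ∈ p, r (p.head h) ≤ r v) ∧
  (∀ i j : ℕ, ∀ (hi : i + 1 < p.length) (hj : j < p.length), i + 1 ≤ j →
    G.Adj (p[i]'(by omega)) (p[j]'hj) → r (p[i+1]'hi) ≤ r (p[j]'hj))

/-- `u` occurs strictly before `w` on the list `p`. -/
def Before {V : Type*} (p : List V) (u w : V) : Prop :=
  ∃ q1 q2 q3 : List V, p = q1 ++ u :: q2 ++ w :: q3

/-
Along a normal path every vertex `u` and every later vertex `w` satisfy `l u ≤ r w`. Fix `w` and
induct along the path up to `w`. The first vertex is leftmost, so its whole interval ends by `r w`.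
If `y` follows `x` and `l x ≤ r w`, then either `x` ends by `r w`, and `y` starts by `r w` because
it meets `x`; or `r w` lies inside the interval of `x`, so that `w` competes with `y` for the
place after `x`, and `r y ≤ r w`. When `r w < r u`, the inequality `l u ≤ r w` says that the
interval of `u` contains the right endpoint of that of `w`.
-/

section

variable {V α : Type*} [LinearOrder α] {G : SimpleGraph V} {l r : V → α} {p : List V} {u w x y : V}

/-- The closed intervals `[l v, r v]` represent the interval graph `G`; two of them intersect
exactly when each starts no later than the other ends. Endpoints may coincide, and an interval may
be a single point. -/
structure IsIntervalRep (G : SimpleGraph V) (l r : V → α) : Prop where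
  left_le_right : ∀ v, l v ≤ r v
  adj_iff : ∀ u v, G.Adj u v ↔ u ≠ v ∧ l u ≤ r v ∧ l v ≤ r u

/-- A normal path that may revisit vertices, with right endpoints in any linear order: a walk that
starts at its leftmost vertex and always proceeds to the leftmost neighbour among the later
entries. -/
structure IsNormalWalk (G : SimpleGraph V) (r : V → α) (p : List V) : Prop where
  isChain : p.IsChain G.Adj
  right_zero_le : ∀ j (hj : j < p.length), r p[0] ≤ r p[j]
  right_succ_le : ∀ i j (hij : i < j) (hj : j < p.length), G.Adj p[i] p[j] → r p[i + 1] ≤ r p[j]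

theorem IsNormalPath.isNormalWalk {r : V → ℝ} (h : IsNormalPath G r p) : IsNormalWalk G r p where
  isChain := h.1
  right_zero_le j hj := by
    have hne : p ≠ [] := List.ne_nil_of_length_pos (by omega)
    simpa only [List.head_eq_getElem] using h.2.2.1 hne p[j] (List.getElem_mem hj)
  right_succ_le i j hij hj := h.2.2.2 i j (by omega) hj hij

theorem Before.rel_of_pairwise {R : V → V → Prop} (h : Before p u w) (hR : p.Pairwise R) :
    R u w := by
  obtain ⟨q₁, q₂, q₃, rfl⟩ := h
  exact (List.pairwise_append.mp hR).2.2 u (by simp) w List.mem_cons_self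

namespace IsIntervalRep

theorem adj_of_right_mem_Ico (hI : IsIntervalRep G l r) (h : r w ∈ Set.Ico (l u) (r u)) :
    G.Adj u w :=
  have hne : u ≠ w := fun huw => h.2.ne (huw ▸ rfl)
  (hI.adj_iff u w).mpr ⟨hne, h.1, (hI.left_le_right w).trans h.2.le⟩

theorem left_le_right_of_adj (hI : IsIntervalRep G l r) (hxy : G.Adj x y) (hx : l x ≤ r w)
    (hy : G.Adj x w → r y ≤ r w) : l y ≤ r w := by
  rcases le_or_gt (r x) (r w) with hxw | hwx
  · exact ((hI.adj_iff x y).mp hxy).2.2.trans hxw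
  · exact (hI.left_le_right y).trans (hy (hI.adj_of_right_mem_Ico ⟨hx, hwx⟩))

end IsIntervalRep

theorem IsNormalWalk.pairwise_left_le_right (hp : IsNormalWalk G r p) (hI : IsIntervalRep G l r) :
    p.Pairwise fun u w => l u ≤ r w := by
  rw [List.pairwise_iff_getElem]
  intro i j hi hj hij
  induction i with
  | zero => exact (hI.left_le_right _).trans (hp.right_zero_le j hj)
  | succ i ih =>
    have hstep : G.Adj p[i] p[i + 1] := hp.isChain.getElem i hi
    exact hI.left_le_right_of_adj hstep (ih (by omega) (by omega))
      (hp.right_succ_le i j (by omega) hj)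

theorem stmt2_general (hI : IsIntervalRep G l r) (hp : IsNormalWalk G r p) (hbefore : Before p u w)
    (hsigma : r w < r u) : G.Adj w u :=
  have hleft : l u ≤ r w := hbefore.rel_of_pairwise (hp.pairwise_left_le_right hI)
  (hI.adj_of_right_mem_Ico ⟨hleft, hsigma⟩).symm

end

theorem stmt2 {V : Type*} [Fintype V]
    (G : SimpleGraph V) (l r : V → ℝ)
    (hlr : ∀ v : V, l v < r v)
    (hinjl : Function.Injective l) (hinjr : Function.Injective r)
    (hlrne : ∀ u v : V, l u ≠ r v)
    (hadj : ∀ u v : V, G.Adj u v ↔ u ≠ v ∧ l u ≤ r v ∧ l v ≤ r u)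
    (p : List V) (hnp : IsNormalPath G r p)
    (u w : V) (hbefore : Before p u w)
    (hsigma : r w < r u) :
    G.Adj w u :=
  stmt2_general ⟨fun v => (hlr v).le, hadj⟩ hnp.isNormalWalk hbefore hsigma
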